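/- For all τ ∈ ℍ, the complex derivative of Δ satisfies Δ'(τ) = 2πi · E2(τ) · Δ(τ); that is, the logarithmic derivative of Δ equals 2πi E2. -/

import Mathlib

/-!
For the Dedekind eta function `η`, both `E₄³ - E₆²` and `1728 η²⁴` are cusp forms of weight 12
with the same leading coefficient, and that space is one-dimensional, so `Δ = η²⁴`. The product
formula for `η` gives `η'/η = (πi/12) E₂`, and taking the 24th power multiplies the logarithmic
derivative by 24.
-/

/-- `q = exp(2πiτ)`. -/
noncomputable def qexp (τ : ℂ) : ℂ := Complex.exp (2 * Real.pi * Complex.I * τ)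

/-- Divisor power sum `σ_k(n) = ∑_{d | n} d^k`, as a complex number. -/
noncomputable def sigmaC (k n : ℕ) : ℂ := ∑ d ∈ Nat.divisors n, (d : ℂ) ^ k

/-- Eisenstein series `E₂`. -/
noncomputable def E2 (τ : ℂ) : ℂ := 1 - 24 * ∑' n : ℕ, sigmaC 1 (n + 1) * qexp τ ^ (n + 1)

/-- Eisenstein series `E₄`. -/
noncomputable def E4 (τ : ℂ) : ℂ := 1 + 240 * ∑' n : ℕ, sigmaC 3 (n + 1) * qexp τ ^ (n + 1)

/-- Eisenstein series `E₆`. -/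
noncomputable def E6 (τ : ℂ) : ℂ := 1 - 504 * ∑' n : ℕ, sigmaC 5 (n + 1) * qexp τ ^ (n + 1)

/-- The discriminant form `Δ = (E₄³ - E₆²)/1728`. -/
noncomputable def Δfun (τ : ℂ) : ℂ := (E4 τ ^ 3 - E6 τ ^ 2) / 1728

/-- The ratio of quasi-periods `p(τ) = τ - 6i/(π E₂(τ))`. -/
noncomputable def pfun (τ : ℂ) : ℂ := τ - 6 * Complex.I / (Real.pi * E2 τ)

open UpperHalfPlane ArithmeticFunction.sigma
open ModularForm (eta)

lemma hasDerivAt_logDeriv_mul_self {𝕜 𝕜' : Type*} [NontriviallyNormedField 𝕜]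
    [NontriviallyNormedField 𝕜'] [NormedAlgebra 𝕜 𝕜'] {f : 𝕜 → 𝕜'} {x : 𝕜}
    (hf : DifferentiableAt 𝕜 f x) (hfx : f x ≠ 0) : HasDerivAt f (logDeriv f x * f x) x := by
  rw [logDeriv_apply, div_mul_cancel₀ _ hfx]
  exact hf.hasDerivAt

lemma bernoulli_four : bernoulli 4 = -1 / 30 := by
  rw [bernoulli_eq_bernoulli'_of_ne_one (by decide), bernoulli'_four]

lemma bernoulli_six : bernoulli 6 = 1 / 42 := by
  decide +kernel

lemma sigmaC_eq_sigma (k n : ℕ) : sigmaC k n = σ k n := by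
  simp only [sigmaC, ArithmeticFunction.sigma_apply, Nat.cast_sum, Nat.cast_pow]

lemma tsum_sigmaC_mul_qexp_pow (k : ℕ) (τ : ℂ) :
    ∑' n : ℕ, sigmaC k (n + 1) * qexp τ ^ (n + 1) =
      ∑' n : ℕ+, (σ k n : ℂ) * Complex.exp (2 * Real.pi * Complex.I * τ) ^ (n : ℕ) := by
  simp only [sigmaC_eq_sigma]
  exact (tsum_pnat_eq_tsum_succ (f := fun n : ℕ ↦ (σ k n : ℂ) * qexp τ ^ n)).symm

lemma E2_eq_eisensteinSeries_E2 (z : ℍ) : E2 z = EisensteinSeries.E2 z := by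
  rw [E2, tsum_sigmaC_mul_qexp_pow, EisensteinSeries.E2_eq_tsum_cexp]

lemma modularForm_E_eq_tsum_sigmaC {k : ℕ} (hk : 3 ≤ k) (hk_even : Even k) (z : ℍ) :
    ModularForm.E hk z =
      1 - 2 * k / bernoulli k * ∑' n : ℕ, sigmaC (k - 1) (n + 1) * qexp z ^ (n + 1) := by
  simp only [tsum_sigmaC_mul_qexp_pow, EisensteinSeries.q_expansion_bernoulli hk hk_even,
    zpow_natCast]

lemma E4_eq_modularForm_E₄ (z : ℍ) : E4 z = ModularForm.E₄ z := by
  rw [E4, modularForm_E_eq_tsum_sigmaC _ ⟨2, rfl⟩, bernoulli_four]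
  norm_num

lemma E6_eq_modularForm_E₆ (z : ℍ) : E6 z = ModularForm.E₆ z := by
  rw [E6, modularForm_E_eq_tsum_sigmaC _ ⟨3, rfl⟩, bernoulli_six]
  norm_num

lemma Δfun_eqOn_eta_pow : Set.EqOn Δfun (eta · ^ 24) upperHalfPlaneSet := by
  intro τ hτ
  lift τ to ℍ using hτ
  rw [Δfun, E4_eq_modularForm_E₄, E6_eq_modularForm_E₆]
  exact (ModularForm.discriminant_eq_E₄_cube_sub_E₆_sq τ).symm

lemma Δfun_ne_zero {τ : ℂ} (hτ : τ ∈ upperHalfPlaneSet) : Δfun τ ≠ 0 := by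
  rw [Δfun_eqOn_eta_pow hτ]
  exact pow_ne_zero 24 (ModularForm.eta_ne_zero hτ)

lemma Δfun_eventuallyEq_eta_pow {τ : ℂ} (hτ : τ ∈ upperHalfPlaneSet) :
    Δfun =ᶠ[nhds τ] (eta · ^ 24) :=
  Δfun_eqOn_eta_pow.eventuallyEq_of_mem (isOpen_upperHalfPlaneSet.mem_nhds hτ)

lemma differentiableAt_Δfun {τ : ℂ} (hτ : τ ∈ upperHalfPlaneSet) : DifferentiableAt ℂ Δfun τ :=
  ((ModularForm.differentiableAt_eta_of_mem_upperHalfPlaneSet hτ).pow 24).congr_of_eventuallyEq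
    (Δfun_eventuallyEq_eta_pow hτ)

lemma logDeriv_Δfun {τ : ℂ} (hτ : τ ∈ upperHalfPlaneSet) :
    logDeriv Δfun τ = 2 * Real.pi * Complex.I * E2 τ := by
  have logDeriv_eta : logDeriv eta τ = Real.pi * Complex.I / 12 * E2 τ := by
    lift τ to ℍ using hτ
    rw [ModularForm.logDeriv_eta_eq_E2, E2_eq_eisensteinSeries_E2]
  calc
    logDeriv Δfun τ = logDeriv (eta · ^ 24) τ :=
      (logDeriv_congr_nhds (Δfun_eventuallyEq_eta_pow hτ)).eq_of_nhds
    _ = (24 : ℕ) * logDeriv eta τ :=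
      logDeriv_fun_pow (ModularForm.differentiableAt_eta_of_mem_upperHalfPlaneSet hτ) 24
    _ = 2 * Real.pi * Complex.I * E2 τ := by
      rw [logDeriv_eta]
      push_cast
      ring

/-- The logarithmic derivative of `Δ` equals `2πi E₂`: `Δ' = 2πi E₂ Δ`. -/
theorem delta_log_derivative (τ : ℂ) (hτ : 0 < τ.im) :
    HasDerivAt Δfun (2 * Real.pi * Complex.I * E2 τ * Δfun τ) τ := by
  rw [← logDeriv_Δfun hτ]
  exact hasDerivAt_logDeriv_mul_self (differentiableAt_Δfun hτ) (Δfun_ne_zero hτ)
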